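/- arXiv:1309.6666 — 6 statements merged into one kernel-verified Lean document; each statement's English description precedes it below -/
import Mathlib

section
/- Let λ > 0 and let f, g : ℝ → ℝ be λ-periodic functions that are piecewise constant with two layers: f(ŷ) = f_A, g(ŷ) = g_A for ŷ ∈ [0, λ/2) and f(ŷ) = f_B, g(ŷ) = g_B for ŷ ∈ [λ/2, λ), for real constants f_A, f_B, g_A, g_B. Then ⟨f·⟦g⟧⟩ = 0. -/
open MeasureTheory

/-- `IsBracket lam a F` says that `F` is the function `⟦a⟧`: the unique continuous
`lam`-periodic function with zero mean whose derivative (in the integrated sense) is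
`a − ⟨a⟩`, i.e. `F(ŷ) = F(0) + ∫₀^ŷ (a(ξ) − ⟨a⟩) dξ` for all `ŷ`. -/
def IsBracket (lam : ℝ) (a F : ℝ → ℝ) : Prop :=
  Continuous F ∧ (∀ y, F (y + lam) = F y) ∧
  (1 / lam) * (∫ y in (0:ℝ)..lam, F y) = 0 ∧
  ∀ yh : ℝ, F yh = F 0 + ∫ ξ in (0:ℝ)..yh,
    (a ξ - (1 / lam) * ∫ s in (0:ℝ)..lam, a s)

/-!
A two-layer function exceeds its mean by a function that is odd under the reflection `y ↦ λ - y`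
of the period. For such a `g`, the integral of `g - ⟨g⟩` over `[y, λ - y]` vanishes, so `⟦g⟧` is
even under the reflection. Hence `f - ⟨f⟩` times `⟦g⟧` is odd and integrates to zero, while
`⟨f⟩ · ⟨⟦g⟧⟩ = 0` because `⟦g⟧` has zero mean.
-/

open Set
open scoped Interval

theorem integral_eq_half_integral_of_ae_add_reflect {E : Type*} [NormedAddCommGroup E]
    [NormedSpace ℝ E] {f φ : ℝ → E} {a b : ℝ} (hf : IntervalIntegrable f volume a b)
    (hφ : ∀ᵐ y, y ∈ Ι a b → f (a + b - y) + f y = φ y) :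
    ∫ y in a..b, f y = (1 / 2 : ℝ) • ∫ y in a..b, φ y := by
  have hf_reflect : IntervalIntegrable (fun y => f (a + b - y)) volume a b := by
    simpa using (hf.comp_sub_left (a + b)).symm
  have integral_reflect : ∫ y in a..b, f (a + b - y) = ∫ y in a..b, f y := by
    simp
  rw [← intervalIntegral.integral_congr_ae hφ,
    intervalIntegral.integral_add hf_reflect hf, integral_reflect, ← two_smul ℝ, smul_smul]
  norm_num

theorem integral_eq_of_ae_add_reflect_eq_const {E : Type*} [NormedAddCommGroup E]
    [NormedSpace ℝ E] [CompleteSpace E] {f : ℝ → E} {a b : ℝ} {c : E}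
    (hf : IntervalIntegrable f volume a b)
    (hc : ∀ᵐ y, y ∈ Ι a b → f (a + b - y) + f y = c) :
    ∫ y in a..b, f y = ((b - a) / 2) • c := by
  rw [integral_eq_half_integral_of_ae_add_reflect hf hc, intervalIntegral.integral_const,
    smul_smul, one_div_mul_eq_div]

theorem integral_smul_eq_zero_of_ae_reflect {E : Type*} [NormedAddCommGroup E]
    [NormedSpace ℝ E] {f : ℝ → ℝ} {F : ℝ → E} {a b c : ℝ}
    (hfF : IntervalIntegrable (fun y => f y • F y) volume a b)
    (hf : ∀ᵐ y, y ∈ Ι a b → f (a + b - y) + f y = c)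
    (hF : ∀ᵐ y, y ∈ Ι a b → F (a + b - y) = F y) (hF_zero : ∫ y in a..b, F y = 0) :
    ∫ y in a..b, f y • F y = 0 := by
  have add_reflect : ∀ᵐ y, y ∈ Ι a b →
      f (a + b - y) • F (a + b - y) + f y • F y = c • F y := by
    filter_upwards [hf, hF] with y hfy hFy hy
    rw [hFy hy, ← add_smul, hfy hy]
  rw [integral_eq_half_integral_of_ae_add_reflect hfF add_reflect,
    intervalIntegral.integral_smul, hF_zero, smul_zero, smul_zero]

theorem IsBracket.apply_sub_of_ae_add_reflect {L c : ℝ} (hL : L ≠ 0) {g G : ℝ → ℝ}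
    (hG : IsBracket L g G) (hg : IntervalIntegrable g volume 0 L)
    (hc : ∀ᵐ y, y ∈ Ι 0 L → g (L - y) + g y = c) {t : ℝ} (ht : t ∈ [[0, L]]) :
    G (L - t) = G t := by
  obtain ⟨-, -, -, G_eq⟩ := hG
  have mean_eq : (1 / L) * ∫ y in (0 : ℝ)..L, g y = c / 2 := by
    rw [integral_eq_of_ae_add_reflect_eq_const hg (by simpa only [zero_add] using hc), smul_eq_mul]
    field_simp
    ring
  have hLt : L - t ∈ [[0, L]] := by
    rw [mem_uIcc] at ht ⊢
    grind
  have subset_left : [[0, t]] ⊆ [[0, L]] := uIcc_subset_uIcc left_mem_uIcc ht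
  have subset_right : [[0, L - t]] ⊆ [[0, L]] := uIcc_subset_uIcc left_mem_uIcc hLt
  have subset_mid : [[t, L - t]] ⊆ [[0, L]] := uIcc_subset_uIcc ht hLt
  have integral_mid : ∫ y in t..(L - t), g y = ((L - t - t) / 2) * c := by
    refine integral_eq_of_ae_add_reflect_eq_const (hg.mono_set subset_mid) ?_
    filter_upwards [hc] with y hy hy_mem
    rw [add_sub_cancel]
    exact hy (uIoc_subset_uIoc_of_uIcc_subset_uIcc subset_mid hy_mem)
  have hgc : IntervalIntegrable (fun y => g y - c / 2) volume 0 L := hg.sub (by simp)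
  rw [G_eq (L - t), G_eq t, mean_eq, add_right_inj, ← sub_eq_zero,
    intervalIntegral.integral_interval_sub_left (hgc.mono_set subset_right)
      (hgc.mono_set subset_left),
    intervalIntegral.integral_sub (hg.mono_set subset_mid) (by simp), integral_mid,
    intervalIntegral.integral_const, smul_eq_mul]
  ring

theorem average_piecewise_mul_bracket_eq_zero_general {L a b : ℝ} (hL : L ≠ 0) {f g G : ℝ → ℝ}
    (hf : IntervalIntegrable f volume 0 L)
    (hf_reflect : ∀ᵐ y, y ∈ Ι 0 L → f (L - y) + f y = a)
    (hg : IntervalIntegrable g volume 0 L)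
    (hg_reflect : ∀ᵐ y, y ∈ Ι 0 L → g (L - y) + g y = b) (hG : IsBracket L g G) :
    (1 / L) * (∫ y in (0 : ℝ)..L, f y * G y) = 0 := by
  have G_reflect : ∀ y ∈ Ι 0 L, G (L - y) = G y := fun y hy =>
    hG.apply_sub_of_ae_add_reflect hL hg hg_reflect (uIoc_subset_uIcc hy)
  obtain ⟨G_continuous, -, G_mean, -⟩ := hG
  have G_integral : ∫ y in (0 : ℝ)..L, G y = 0 :=
    (mul_eq_zero.mp G_mean).resolve_left (one_div_ne_zero hL)
  have fG_integral : ∫ y in (0 : ℝ)..L, f y * G y = 0 :=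
    integral_smul_eq_zero_of_ae_reflect (hf.mul_continuousOn G_continuous.continuousOn)
      (by simpa only [zero_add] using hf_reflect)
      (by simpa only [zero_add] using .of_forall G_reflect) G_integral
  rw [fG_integral, mul_zero]

section TwoLayer

variable {E : Type*} [NormedAddCommGroup E] {f : ℝ → E} {A B : E} {a m b L : ℝ}

theorem intervalIntegrable_of_two_layer (ham : a ≤ m) (hmb : m ≤ b)
    (hA : ∀ y ∈ Ico a m, f y = A) (hB : ∀ y ∈ Ico m b, f y = B) :
    IntervalIntegrable f volume a b := by
  have h_left : IntervalIntegrable f volume a m :=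
    (intervalIntegrable_const (c := A)).congr_uIoo fun y hy =>
      (hA y (Ioo_subset_Ico_self (uIoo_of_le ham ▸ hy))).symm
  have h_right : IntervalIntegrable f volume m b :=
    (intervalIntegrable_const (c := B)).congr_uIoo fun y hy =>
      (hB y (Ioo_subset_Ico_self (uIoo_of_le hmb ▸ hy))).symm
  exact h_left.trans h_right

theorem ae_add_reflect_of_two_layer (hL : 0 ≤ L) (hA : ∀ y ∈ Ico 0 (L / 2), f y = A)
    (hB : ∀ y ∈ Ico (L / 2) L, f y = B) :
    ∀ᵐ y, y ∈ Ι 0 L → f (L - y) + f y = A + B := by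
  -- The identity can fail at the interface `L / 2`, which the reflection fixes, and at `L`.
  filter_upwards [volume.ae_ne (L / 2), volume.ae_ne L] with y hy_mid hy_end hy
  rw [uIoc_of_le hL] at hy
  have hy_lt : y < L := hy.2.lt_of_ne hy_end
  rcases hy_mid.lt_or_gt with h | h
  · rw [hA y ⟨hy.1.le, h⟩, hB (L - y) ⟨by linarith, by linarith [hy.1]⟩, add_comm]
  · rw [hB y ⟨h.le, hy_lt⟩, hA (L - y) ⟨by linarith, by linarith⟩]

end TwoLayer

/-- If `f` and `g` are `λ`-periodic two-layer piecewise constant functions,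
then `⟨f·⟦g⟧⟩ = 0`. -/
theorem average_piecewise_mul_bracket_eq_zero
    (lam : ℝ) (hlam : 0 < lam) (f g : ℝ → ℝ) (fA fB gA gB : ℝ)
    (hf_per : ∀ y, f (y + lam) = f y) (hg_per : ∀ y, g (y + lam) = g y)
    (hfA : ∀ y ∈ Set.Ico (0:ℝ) (lam / 2), f y = fA)
    (hfB : ∀ y ∈ Set.Ico (lam / 2) lam, f y = fB)
    (hgA : ∀ y ∈ Set.Ico (0:ℝ) (lam / 2), g y = gA)
    (hgB : ∀ y ∈ Set.Ico (lam / 2) lam, g y = gB)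
    (G : ℝ → ℝ) (hG : IsBracket lam g G) :
    (1 / lam) * (∫ y in (0:ℝ)..lam, f y * G y) = 0 :=
  average_piecewise_mul_bracket_eq_zero_general hlam.ne'
    (intervalIntegrable_of_two_layer (half_pos hlam).le (half_le_self hlam.le) hfA hfB)
    (ae_add_reflect_of_two_layer hlam.le hfA hfB)
    (intervalIntegrable_of_two_layer (half_pos hlam).le (half_le_self hlam.le) hgA hgB)
    (ae_add_reflect_of_two_layer hlam.le hgA hgB) hG
end

section
/- Let K_h, ρ_h, ρ_m > 0, let δ, α₁, α₂, β₁, β₂, γ₁, γ₂ be real parameters, let ω ∈ ℝ with ω ≠ 0, and let (k_x, k_y) ∈ ℝ². Set a = α₁k_y² + α₂k_x², b = β₁k_y² + β₂k_x², c = γ₁k_y² + γ₂k_x². There exist complex amplitudes (P, U, V) ≠ (0,0,0) such that p̄ = P e^{i(k_x x + k_y y − ωt)}, ū = U e^{i(·)}, v̄ = V e^{i(·)} solve the second-order homogenized system K_h⁻¹p̄_t + ū_x + v̄_y = δ²[α₁(ū_xyy + v̄_yyy) + α₂(ū_xxx + v̄_xxy)], ρ_h ū_t + p̄_x = δ²[β₁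 p̄_xyy + β₂ p̄_xxx], ρ_m v̄_t + p̄_y = δ²[γ₁ p̄_yyy + γ₂ p̄_xxy] for all (x, y, t), if and only if ω² = K_h (1 + δ²a) [ (k_x²/ρ_h)(1 + δ²b) + (k_y²/ρ_m)(1 + δ²c) ]. Expanding in δ, this reproduces the O(δ²) terms of the effective dispersion relation of the homogenized medium. -/
/-- Partial derivative in the first (`x`) variable of a complex field on `ℝ³`. -/
noncomputable def pdX (f : ℝ → ℝ → ℝ → ℂ) : ℝ → ℝ → ℝ → ℂ :=
  fun x y t => deriv (fun x' => f x' y t) x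

/-- Partial derivative in the second (`y`) variable of a complex field on `ℝ³`. -/
noncomputable def pdY (f : ℝ → ℝ → ℝ → ℂ) : ℝ → ℝ → ℝ → ℂ :=
  fun x y t => deriv (fun y' => f x y' t) y

/-- Partial derivative in the third (`t`) variable of a complex field on `ℝ³`. -/
noncomputable def pdT (f : ℝ → ℝ → ℝ → ℂ) : ℝ → ℝ → ℝ → ℂ :=
  fun x y t => deriv (fun t' => f x y t') t

/-- The plane wave `A e^{i(k_x x + k_y y − ω t)}`. -/
noncomputable def planeWave (A : ℂ) (kx ky ω : ℝ) : ℝ → ℝ → ℝ → ℂ :=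
  fun x y t => A * Complex.exp (Complex.I * ((kx * x + ky * y - ω * t : ℝ) : ℂ))

/-!
On waves proportional to `e^{i(k_x x + k_y y − ωt)}` each partial derivative multiplies the
amplitude by `i k_x`, `i k_y` or `−iω`, so `1 - δ²(κ₁ ∂_y² + κ₂ ∂_x²)` acts as the scalar
`1 + δ²(κ₁ k_y² + κ₂ k_x²)`. The three equations are built from such operators and become a linear
system in which the pressure couples to the velocities and the velocities only to the pressure:
`ω P = f(U, V)` and `ω (U, V) = P v` for a linear form `f` and a vector `v`. Since `ω ≠ 0`, a
nonzero solution has `P ≠ 0`, and eliminating `(U, V)` leaves `ω² = f(v)`.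
-/

/-- The Fourier symbol of the operator `1 - δ²(κ₁ ∂_y² + κ₂ ∂_x²)` at the wave vector
`(kx, ky)`. The factors `1 + δ²a`, `1 + δ²b`, `1 + δ²c` of the dispersion relation are its values
for `κ = α, β, γ`. -/
def dispersiveFactor (δ κ₁ κ₂ : ℂ) (kx ky : ℝ) : ℂ :=
  1 + δ ^ 2 * (κ₁ * ky ^ 2 + κ₂ * kx ^ 2)

/-- The fields `p`, `u`, `v` solve the second-order homogenized system. The coefficients are
complex, so that lossy media are included. -/
def IsHomogenizedSolution (Kh ρh ρm δ α₁ α₂ β₁ β₂ γ₁ γ₂ : ℂ) (p u v : ℝ → ℝ → ℝ → ℂ) : Prop :=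
  ∀ x y t : ℝ,
    (Kh⁻¹ * pdT p x y t + pdX u x y t + pdY v x y t
      = δ ^ 2 * (α₁ * (pdX (pdY (pdY u)) x y t + pdY (pdY (pdY v)) x y t)
        + α₂ * (pdX (pdX (pdX u)) x y t + pdX (pdX (pdY v)) x y t))) ∧
    (ρh * pdT u x y t + pdX p x y t
      = δ ^ 2 * (β₁ * pdX (pdY (pdY p)) x y t + β₂ * pdX (pdX (pdX p)) x y t)) ∧
    (ρm * pdT v x y t + pdY p x y t
      = δ ^ 2 * (γ₁ * pdY (pdY (pdY p)) x y t + γ₂ * pdX (pdX (pdY p)) x y t))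

theorem deriv_const_mul_cexp_I_mul {φ : ℝ → ℝ} {k s : ℝ} (hφ : HasDerivAt φ k s) (A : ℂ) :
    deriv (fun s => A * Complex.exp (Complex.I * (φ s : ℂ))) s =
      Complex.I * k * A * Complex.exp (Complex.I * (φ s : ℂ)) :=
  (((hφ.ofReal_comp.const_mul Complex.I).cexp.const_mul A).congr_deriv (by ring)).deriv

section PlaneWave

variable (A B : ℂ) (kx ky ω : ℝ)

theorem pdX_planeWave :
    pdX (planeWave A kx ky ω) = planeWave (Complex.I * kx * A) kx ky ω := by
  funext x y t
  refine deriv_const_mul_cexp_I_mul ?_ A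
  simpa using (((hasDerivAt_id x).const_mul kx).add_const (ky * y)).sub_const (ω * t)

theorem pdY_planeWave :
    pdY (planeWave A kx ky ω) = planeWave (Complex.I * ky * A) kx ky ω := by
  funext x y t
  refine deriv_const_mul_cexp_I_mul ?_ A
  simpa using (((hasDerivAt_id y).const_mul ky).const_add (kx * x)).sub_const (ω * t)

theorem pdT_planeWave :
    pdT (planeWave A kx ky ω) = planeWave (-(Complex.I * ω * A)) kx ky ω := by
  funext x y t
  have hφ : HasDerivAt (fun t' => kx * x + ky * y - ω * t') (-ω) t := by
    simpa using ((hasDerivAt_id t).const_mul ω).const_sub (kx * x + ky * y)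
  refine (deriv_const_mul_cexp_I_mul hφ A).trans ?_
  simp only [planeWave, Complex.ofReal_neg, mul_neg, neg_mul]

variable (x y t : ℝ)

theorem planeWave_add_planeWave :
    planeWave A kx ky ω x y t + planeWave B kx ky ω x y t = planeWave (A + B) kx ky ω x y t :=
  (add_mul ..).symm

theorem mul_planeWave (c : ℂ) :
    c * planeWave A kx ky ω x y t = planeWave (c * A) kx ky ω x y t :=
  (mul_assoc ..).symm

variable {A B kx ky ω x y t} in
theorem planeWave_apply_inj :
    planeWave A kx ky ω x y t = planeWave B kx ky ω x y t ↔ A = B :=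
  mul_left_inj' (Complex.exp_ne_zero _)

end PlaneWave

theorem eq_iff_eq_of_sub_eq_mul_sub {R : Type*} [Ring R] [NoZeroDivisors R] {r a b c d : R}
    (hr : r ≠ 0) (h : a - b = r * (c - d)) : a = b ↔ c = d := by
  rw [← sub_eq_zero, h, mul_eq_zero, or_iff_right hr, sub_eq_zero]

theorem isHomogenizedSolution_planeWave_iff (Kh ρh ρm δ α₁ α₂ β₁ β₂ γ₁ γ₂ P U V : ℂ)
    (kx ky ω : ℝ) :
    IsHomogenizedSolution Kh ρh ρm δ α₁ α₂ β₁ β₂ γ₁ γ₂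
        (planeWave P kx ky ω) (planeWave U kx ky ω) (planeWave V kx ky ω) ↔
      Kh⁻¹ * (ω * P) = dispersiveFactor δ α₁ α₂ kx ky * (kx * U + ky * V) ∧
      ρh * (ω * U) = dispersiveFactor δ β₁ β₂ kx ky * (kx * P) ∧
      ρm * (ω * V) = dispersiveFactor δ γ₁ γ₂ kx ky * (ky * P) := by
  have hI : -Complex.I ≠ 0 := neg_ne_zero.2 Complex.I_ne_zero
  have hI₃ : Complex.I ^ 3 = -Complex.I := Complex.I_pow_three
  simp only [IsHomogenizedSolution, pdX_planeWave, pdY_planeWave, pdT_planeWave, mul_planeWave,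
    planeWave_add_planeWave, planeWave_apply_inj, forall_const, dispersiveFactor]
  refine and_congr ?_ (and_congr ?_ ?_) <;> refine eq_iff_eq_of_sub_eq_mul_sub hI ?_
  · linear_combination -δ ^ 2 * (α₁ * ky ^ 2 + α₂ * kx ^ 2) * (kx * U + ky * V) * hI₃
  · linear_combination -δ ^ 2 * (β₁ * ky ^ 2 + β₂ * kx ^ 2) * kx * P * hI₃
  · linear_combination -δ ^ 2 * (γ₁ * ky ^ 2 + γ₂ * kx ^ 2) * ky * P * hI₃

/-- The left-hand side says that `w` is an eigenvalue of `(c, u) ↦ (f u, c • v)` on `R × M`. -/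
theorem exists_ne_zero_mul_eq_smul_eq_iff_sq_eq {R M : Type*} [CommRing R] [IsDomain R]
    [AddCommGroup M] [Module R M] [Module.IsTorsionFree R M] (f : M →ₗ[R] R) (v : M) {w : R}
    (hw : w ≠ 0) :
    (∃ (c : R) (u : M), (c, u) ≠ 0 ∧ w * c = f u ∧ w • u = c • v) ↔ w ^ 2 = f v := by
  constructor
  · rintro ⟨c, u, hne, hc, hu⟩
    have hc₀ : c ≠ 0 := by
      rintro rfl
      rw [zero_smul, smul_eq_zero_iff_right hw] at hu
      exact hne (by rw [hu, Prod.mk_zero_zero])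
    apply mul_left_cancel₀ hc₀
    calc c * w ^ 2 = w * (w * c) := by ring
      _ = f (w • u) := by rw [hc, map_smul, smul_eq_mul]
      _ = c * f v := by rw [hu, map_smul, smul_eq_mul]
  · intro h
    exact ⟨w, v, fun h₀ => hw (congrArg Prod.fst h₀), by rw [← h, sq], rfl⟩

theorem second_order_dispersion_relation_general {Kh ρh ρm : ℂ} (hKh : Kh ≠ 0) (hρh : ρh ≠ 0)
    (hρm : ρm ≠ 0) (δ α₁ α₂ β₁ β₂ γ₁ γ₂ : ℂ) {ω : ℝ} (hω : ω ≠ 0) (kx ky : ℝ) :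
    (∃ P U V : ℂ, (P, U, V) ≠ (0, 0, 0) ∧
      IsHomogenizedSolution Kh ρh ρm δ α₁ α₂ β₁ β₂ γ₁ γ₂
        (planeWave P kx ky ω) (planeWave U kx ky ω) (planeWave V kx ky ω)) ↔
      (ω : ℂ) ^ 2 = Kh * dispersiveFactor δ α₁ α₂ kx ky *
        (kx ^ 2 / ρh * dispersiveFactor δ β₁ β₂ kx ky +
          ky ^ 2 / ρm * dispersiveFactor δ γ₁ γ₂ kx ky) := by
  simp only [isHomogenizedSolution_planeWave_iff]
  generalize dispersiveFactor δ α₁ α₂ kx ky = A, dispersiveFactor δ β₁ β₂ kx ky = B,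
    dispersiveFactor δ γ₁ γ₂ kx ky = C
  let f : ℂ × ℂ →ₗ[ℂ] ℂ :=
    (Kh * A) • ((kx : ℂ) • LinearMap.fst ℂ ℂ ℂ + (ky : ℂ) • LinearMap.snd ℂ ℂ ℂ)
  let v : ℂ × ℂ := (B * kx / ρh, C * ky / ρm)
  have hf (U V : ℂ) : f (U, V) = Kh * A * (kx * U + ky * V) := rfl
  have h_iff (P U V : ℂ) :
      (Kh⁻¹ * (ω * P) = A * (kx * U + ky * V) ∧ ρh * (ω * U) = B * (kx * P) ∧
        ρm * (ω * V) = C * (ky * P)) ↔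
      ω * P = f (U, V) ∧ (ω : ℂ) • (U, V) = P • v := by
    simp only [hf, v, Prod.smul_mk, Prod.mk.injEq, smul_eq_mul]
    field_simp
  have hfv : f v = Kh * A * (kx ^ 2 / ρh * B + ky ^ 2 / ρm * C) := by
    rw [hf]
    ring
  simp only [h_iff, ← hfv]
  rw [← exists_ne_zero_mul_eq_smul_eq_iff_sq_eq f v (Complex.ofReal_ne_zero.2 hω)]
  simp only [Prod.exists, Prod.zero_eq_mk]

/-- A nontrivial plane wave solves the second-order homogenized system
(with `O(δ²)` dispersive corrections) iff
`ω² = K_h (1 + δ²a) [(k_x²/ρ_h)(1 + δ²b) + (k_y²/ρ_m)(1 + δ²c)]`,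
where `a = α₁k_y² + α₂k_x²`, `b = β₁k_y² + β₂k_x²`, `c = γ₁k_y² + γ₂k_x²`. -/
theorem second_order_dispersion_relation
    (Kh ρh ρm : ℝ) (hKh : 0 < Kh) (hρh : 0 < ρh) (hρm : 0 < ρm)
    (δ α₁ α₂ β₁ β₂ γ₁ γ₂ : ℝ) (ω kx ky : ℝ) (hω : ω ≠ 0)
    (a b c : ℝ)
    (ha : a = α₁ * ky ^ 2 + α₂ * kx ^ 2)
    (hb : b = β₁ * ky ^ 2 + β₂ * kx ^ 2)
    (hc : c = γ₁ * ky ^ 2 + γ₂ * kx ^ 2) :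
    (∃ P U V : ℂ, (P, U, V) ≠ (0, 0, 0) ∧
      ∀ x y t : ℝ,
        ((Kh : ℂ)⁻¹ * pdT (planeWave P kx ky ω) x y t
            + pdX (planeWave U kx ky ω) x y t + pdY (planeWave V kx ky ω) x y t
          = (δ : ℂ) ^ 2 *
            ((α₁ : ℂ) * (pdX (pdY (pdY (planeWave U kx ky ω))) x y t
                + pdY (pdY (pdY (planeWave V kx ky ω))) x y t)
            + (α₂ : ℂ) * (pdX (pdX (pdX (planeWave U kx ky ω))) x y t
                + pdX (pdX (pdY (planeWave V kx ky ω))) x y t))) ∧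
        ((ρh : ℂ) * pdT (planeWave U kx ky ω) x y t + pdX (planeWave P kx ky ω) x y t
          = (δ : ℂ) ^ 2 *
            ((β₁ : ℂ) * pdX (pdY (pdY (planeWave P kx ky ω))) x y t
            + (β₂ : ℂ) * pdX (pdX (pdX (planeWave P kx ky ω))) x y t)) ∧
        ((ρm : ℂ) * pdT (planeWave V kx ky ω) x y t + pdY (planeWave P kx ky ω) x y t
          = (δ : ℂ) ^ 2 *
            ((γ₁ : ℂ) * pdY (pdY (pdY (planeWave P kx ky ω))) x y t
            + (γ₂ : ℂ) * pdX (pdX (pdY (planeWave P kx ky ω))) x y t)))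
    ↔ ω ^ 2 = Kh * (1 + δ ^ 2 * a) *
        (kx ^ 2 / ρh * (1 + δ ^ 2 * b) + ky ^ 2 / ρm * (1 + δ ^ 2 * c)) := by
  subst ha hb hc
  refine (second_order_dispersion_relation_general (Complex.ofReal_ne_zero.2 hKh.ne')
    (Complex.ofReal_ne_zero.2 hρh.ne') (Complex.ofReal_ne_zero.2 hρm.ne')
    δ α₁ α₂ β₁ β₂ γ₁ γ₂ hω kx ky).trans ?_
  simp only [dispersiveFactor]
  norm_cast
end

section
/- For the layered medium, define the fast-variable functions A = ⟦K⁻¹K_h − ρ⁻¹ρ_h⟧, B = ⟦K⁻¹K_h⟧, C = ⟦ρ ρ_m⁻¹⟧, F = ⟦ρ ρ_m⁻¹ B − C⟧, H = ⟦ρ ρ_h⁻¹ A⟧. Then the leading dispersive homogenization coefficients α₁ := K_h⟨K⁻¹F⟩ and α₂ := K_h⟨K⁻¹H⟩ satisfy α₁ = −(K_A − K_B)(Z_A² − Z_B²) λ² / (192 K_m² ρ_m) and α₂ = −(K_A − K_B)(c_A² − c_B²) ρ_m λ² / (192 K_m²). -/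
open MeasureTheory

/-!
The bracket is skew-adjoint for the mean over a period, `⟨a⟦b⟧⟩ = -⟨b⟦a⟧⟩`, so that
`α₁ = ⟨⟦ρ ρ_m⁻¹ B - C⟧ K⁻¹K_h⟩ = ⟨C B⟩ - ⟨ρ ρ_m⁻¹ B²⟩` and `α₂ = -⟨ρ ρ_h⁻¹ A B⟩`.
The bracket of a function taking the values `p` and `q` on the two layers is `(p - q) / 2` times a
fixed triangle wave, whose square has mean `λ² / 48` over each layer.
-/

open Set intervalIntegral

namespace IsBracket

variable {lam : ℝ} {a b F G : ℝ → ℝ}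

lemma integral_eq_zero (hF : IsBracket lam a F) : ∫ y in 0..lam, F y = 0 := by
  rcases mul_eq_zero.mp hF.2.2.1 with h | h
  · rw [eq_zero_of_one_div_eq_zero h, integral_same]
  · exact h

lemma eq_add_integral (hF : IsBracket lam a F) :
    F = fun y => F 0 + ∫ ξ in 0..y, (a ξ - (1 / lam) * ∫ s in 0..lam, a s) :=
  funext hF.2.2.2

lemma absolutelyContinuousOnInterval (hF : IsBracket lam a F)
    (ha : IntervalIntegrable a volume 0 lam) : AbsolutelyContinuousOnInterval F 0 lam := by
  rw [hF.eq_add_integral]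
  exact (LipschitzWith.const (F 0)).lipschitzOnWith.absolutelyContinuousOnInterval.fun_add
    ((ha.sub intervalIntegrable_const).absolutelyContinuousOnInterval_intervalIntegral
      left_mem_uIcc)

lemma ae_deriv_eq (hF : IsBracket lam a F) (ha : IntervalIntegrable a volume 0 lam) :
    ∀ᵐ y, y ∈ uIcc 0 lam → deriv F y = a y - (1 / lam) * ∫ s in 0..lam, a s := by
  filter_upwards [(ha.sub (intervalIntegrable_const
    (c := (1 / lam) * ∫ s in 0..lam, a s))).ae_hasDerivAt_integral] with y hy hmem
  rw [hF.eq_add_integral]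
  exact ((hy hmem 0 left_mem_uIcc).const_add (F 0)).deriv

lemma integral_mul_eq_neg (hF : IsBracket lam a F) (hG : IsBracket lam b G)
    (ha : IntervalIntegrable a volume 0 lam) (hb : IntervalIntegrable b volume 0 lam) :
    ∫ y in 0..lam, b y * F y = -∫ y in 0..lam, a y * G y := by
  set m := (1 / lam) * ∫ s in 0..lam, a s
  set n := (1 / lam) * ∫ s in 0..lam, b s
  have haG := ha.mul_continuousOn hG.1.continuousOn
  have hbF := hb.mul_continuousOn hF.1.continuousOn
  have hmG := (hG.1.const_mul m).intervalIntegrable (μ := volume) 0 lam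
  have hnF := (hF.1.const_mul n).intervalIntegrable (μ := volume) 0 lam
  have hperiod : F lam * G lam - F 0 * G 0 = 0 := by
    simpa using congr_arg₂ (· * · - F 0 * G 0) (hF.2.1 0) (hG.2.1 0)
  have hparts := (hF.absolutelyContinuousOnInterval ha).integral_deriv_mul_eq_sub
    (hG.absolutelyContinuousOnInterval hb)
  have hderiv : ∫ y in 0..lam, deriv F y * G y + F y * deriv G y =
      ∫ y in 0..lam, (a y * G y - m * G y) + (b y * F y - n * F y) := by
    refine integral_congr_ae ?_
    filter_upwards [hF.ae_deriv_eq ha, hG.ae_deriv_eq hb] with y hFy hGy hy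
    rw [hFy (uIoc_subset_uIcc hy), hGy (uIoc_subset_uIcc hy)]
    ring
  rw [hderiv, hperiod, integral_add (haG.sub hmG) (hbF.sub hnF), integral_sub haG hmG,
    integral_sub hbF hnF, intervalIntegral.integral_const_mul, intervalIntegral.integral_const_mul,
    hF.integral_eq_zero, hG.integral_eq_zero] at hparts
  linarith

lemma mul_mean_inv_mul {k : ℝ} {K : ℝ → ℝ} (hF : IsBracket lam a F)
    (hG : IsBracket lam (fun y => k / K y) G) (ha : IntervalIntegrable a volume 0 lam)
    (hK : IntervalIntegrable (fun y => k / K y) volume 0 lam) :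
    k * ((1 / lam) * ∫ y in 0..lam, (K y)⁻¹ * F y) =
      -((1 / lam) * ∫ y in 0..lam, a y * G y) := by
  calc k * ((1 / lam) * ∫ y in 0..lam, (K y)⁻¹ * F y)
      = (1 / lam) * ∫ y in 0..lam, k / K y * F y := by
        simp only [div_eq_mul_inv k, mul_assoc k, intervalIntegral.integral_const_mul]
        ring
    _ = -((1 / lam) * ∫ y in 0..lam, a y * G y) := by
        rw [hF.integral_mul_eq_neg hG ha hK, mul_neg]

end IsBracket

/-- `IsLayered lam f p q`: on the period `[0, lam)`, the function `f` takes the value `p` on the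
first half and the value `q` on the second half. -/
def IsLayered (lam : ℝ) (f : ℝ → ℝ) (p q : ℝ) : Prop :=
  (∀ y ∈ Ico 0 (lam / 2), f y = p) ∧ ∀ y ∈ Ico (lam / 2) lam, f y = q

/-- One period, over `[0, lam]`, of the triangle wave with slopes `±1` and mean zero; the formula
is not periodic outside this interval. -/
noncomputable def triangleWave (lam y : ℝ) : ℝ := lam / 4 - |y - lam / 2|

lemma triangleWave_of_le_half {lam y : ℝ} (hy : y ≤ lam / 2) :
    triangleWave lam y = y - lam / 4 := by
  rw [triangleWave, abs_of_nonpos (sub_nonpos.mpr hy)]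
  ring

lemma triangleWave_of_half_le {lam y : ℝ} (hy : lam / 2 ≤ y) :
    triangleWave lam y = 3 * lam / 4 - y := by
  rw [triangleWave, abs_of_nonneg (sub_nonneg.mpr hy)]
  ring

lemma continuous_triangleWave (lam : ℝ) : Continuous (triangleWave lam) := by
  unfold triangleWave
  fun_prop

namespace IsLayered

variable {lam p q r s : ℝ} {f g : ℝ → ℝ}

lemma const (lam c : ℝ) : IsLayered lam (fun _ => c) c c :=
  ⟨fun _ _ => rfl, fun _ _ => rfl⟩

lemma comp (hf : IsLayered lam f p q) (φ : ℝ → ℝ) :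
    IsLayered lam (fun y => φ (f y)) (φ p) (φ q) :=
  ⟨fun y hy => congr_arg φ (hf.1 y hy), fun y hy => congr_arg φ (hf.2 y hy)⟩

lemma sub (hf : IsLayered lam f p q) (hg : IsLayered lam g r s) :
    IsLayered lam (fun y => f y - g y) (p - r) (q - s) :=
  ⟨fun y hy => congr_arg₂ (· - ·) (hf.1 y hy) (hg.1 y hy),
    fun y hy => congr_arg₂ (· - ·) (hf.2 y hy) (hg.2 y hy)⟩

lemma eqOn_left (hf : IsLayered lam f p q) : EqOn f (fun _ => p) (Ioo 0 (lam / 2)) :=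
  fun y hy => hf.1 y (Ioo_subset_Ico_self hy)

lemma eqOn_right (hf : IsLayered lam f p q) : EqOn f (fun _ => q) (Ioo (lam / 2) lam) :=
  fun y hy => hf.2 y (Ioo_subset_Ico_self hy)

lemma intervalIntegrable_left (hf : IsLayered lam f p q) (hlam : 0 ≤ lam) :
    IntervalIntegrable f volume 0 (lam / 2) :=
  intervalIntegrable_const.congr_uIoo (by rw [uIoo_of_le (by linarith)]; exact hf.eqOn_left.symm)

lemma intervalIntegrable_right (hf : IsLayered lam f p q) (hlam : 0 ≤ lam) :
    IntervalIntegrable f volume (lam / 2) lam :=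
  intervalIntegrable_const.congr_uIoo (by rw [uIoo_of_le (by linarith)]; exact hf.eqOn_right.symm)

lemma intervalIntegrable (hf : IsLayered lam f p q) (hlam : 0 ≤ lam) :
    IntervalIntegrable f volume 0 lam :=
  (hf.intervalIntegrable_left hlam).trans (hf.intervalIntegrable_right hlam)

lemma intervalIntegrable_mul (hf : IsLayered lam f p q) (hg : Continuous g) (hlam : 0 ≤ lam) :
    IntervalIntegrable (fun y => f y * g y) volume 0 lam :=
  (hf.intervalIntegrable hlam).mul_continuousOn hg.continuousOn

lemma integral_eq_triangleWave (hf : IsLayered lam f p q) {y : ℝ} (hy : y ∈ Icc 0 lam) :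
    ∫ x in 0..y, f x = (p + q) / 2 * y + (p - q) / 2 * (triangleWave lam y + lam / 4) := by
  have hlam : 0 ≤ lam := hy.1.trans hy.2
  have hleft {z : ℝ} (hz : 0 ≤ z) (hz' : z ≤ lam / 2) : ∫ x in 0..z, f x = z * p := by
    rw [integral_congr_Ioo_of_le hz (hf.eqOn_left.mono (Ioo_subset_Ioo_right hz')),
      intervalIntegral.integral_const, sub_zero, smul_eq_mul]
  rcases le_total y (lam / 2) with hhalf | hhalf
  · rw [hleft hy.1 hhalf, triangleWave_of_le_half hhalf]
    ring
  · have hright : ∫ x in (lam / 2)..y, f x = (y - lam / 2) * q := by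
      rw [integral_congr_Ioo_of_le hhalf (hf.eqOn_right.mono (Ioo_subset_Ioo_right hy.2)),
        intervalIntegral.integral_const, smul_eq_mul]
    have hsub : uIcc (lam / 2) y ⊆ uIcc (lam / 2) lam := by
      rw [uIcc_of_le hhalf, uIcc_of_le (hhalf.trans hy.2)]
      exact Icc_subset_Icc_right hy.2
    rw [← integral_add_adjacent_intervals (hf.intervalIntegrable_left hlam)
      ((hf.intervalIntegrable_right hlam).mono_set hsub), hleft (by linarith) le_rfl, hright,
      triangleWave_of_half_le hhalf]
    ring

lemma mean_eq (hf : IsLayered lam f p q) (hlam : 0 < lam) :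
    (1 / lam) * ∫ y in 0..lam, f y = (p + q) / 2 := by
  rw [hf.integral_eq_triangleWave ⟨hlam.le, le_rfl⟩, triangleWave_of_half_le (by linarith)]
  field_simp
  ring

lemma integral_mul_triangleWave_pow (hf : IsLayered lam f p q) (hlam : 0 ≤ lam) (n : ℕ) :
    ∫ y in 0..lam, f y * triangleWave lam y ^ n =
      (p + q) * (((lam / 4) ^ (n + 1) - (-(lam / 4)) ^ (n + 1)) / (n + 1)) := by
  have hcont : Continuous fun y => triangleWave lam y ^ n := (continuous_triangleWave lam).pow n
  have hleft : ∫ y in 0..lam / 2, f y * triangleWave lam y ^ n =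
      p * (((lam / 4) ^ (n + 1) - (-(lam / 4)) ^ (n + 1)) / (n + 1)) := by
    rw [integral_congr_Ioo_of_le (g := fun y => p * (y - lam / 4) ^ n) (by linarith)
      fun y hy => by simp only [hf.eqOn_left hy, triangleWave_of_le_half hy.2.le]]
    rw [intervalIntegral.integral_const_mul, integral_comp_sub_right (· ^ n), integral_pow]
    ring_nf
  have hright : ∫ y in (lam / 2)..lam, f y * triangleWave lam y ^ n =
      q * (((lam / 4) ^ (n + 1) - (-(lam / 4)) ^ (n + 1)) / (n + 1)) := by
    rw [integral_congr_Ioo_of_le (g := fun y => q * (3 * lam / 4 - y) ^ n) (by linarith)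
      fun y hy => by simp only [hf.eqOn_right hy, triangleWave_of_half_le hy.1.le]]
    rw [intervalIntegral.integral_const_mul, integral_comp_sub_left (· ^ n), integral_pow]
    ring_nf
  rw [← integral_add_adjacent_intervals
    ((hf.intervalIntegrable_left hlam).mul_continuousOn hcont.continuousOn)
    ((hf.intervalIntegrable_right hlam).mul_continuousOn hcont.continuousOn), hleft, hright,
    add_mul]

end IsLayered

lemma integral_triangleWave {lam : ℝ} (hlam : 0 ≤ lam) :
    ∫ y in 0..lam, triangleWave lam y = 0 := by
  simpa using (IsLayered.const lam 1).integral_mul_triangleWave_pow hlam 1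

namespace IsBracket

variable {lam p q r s u v : ℝ} {a b w F G : ℝ → ℝ}

lemma eqOn_mul_triangleWave (hF : IsBracket lam a F) (ha : IsLayered lam a p q) (hlam : 0 < lam) :
    EqOn F (fun y => (p - q) / 2 * triangleWave lam y) (Icc 0 lam) := by
  have hFy {y : ℝ} (hy : y ∈ Icc 0 lam) :
      F y = F 0 + (p - q) / 2 * (triangleWave lam y + lam / 4) := by
    rw [hF.2.2.2 y, ha.mean_eq hlam,
      (ha.sub (.const lam ((p + q) / 2))).integral_eq_triangleWave hy]
    ring
  have hF0 : F 0 + (p - q) / 2 * (lam / 4) = 0 := by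
    have hint : ∫ y in 0..lam, F y = (F 0 + (p - q) / 2 * (lam / 4)) * lam := by
      rw [integral_congr_Ioo_of_le
        (g := fun y => F 0 + (p - q) / 2 * (lam / 4) + (p - q) / 2 * triangleWave lam y) hlam.le
        fun y hy => by simp only [hFy (Ioo_subset_Icc_self hy)]; ring]
      rw [integral_add intervalIntegrable_const
          (((continuous_triangleWave lam).const_mul _).intervalIntegrable _ _),
        intervalIntegral.integral_const_mul, integral_triangleWave hlam.le,
        intervalIntegral.integral_const, smul_eq_mul]
      ring
    exact (mul_eq_zero.mp (hint.symm.trans hF.integral_eq_zero)).resolve_right hlam.ne'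
  intro y hy
  linear_combination hFy hy + hF0

lemma mean_layered_mul_mul (hF : IsBracket lam a F) (hG : IsBracket lam b G)
    (hw : IsLayered lam w u v) (ha : IsLayered lam a p q) (hb : IsLayered lam b r s)
    (hlam : 0 < lam) :
    (1 / lam) * ∫ y in 0..lam, w y * F y * G y =
      (u + v) / 2 * ((p - q) / 2) * ((r - s) / 2) * (lam ^ 2 / 48) := by
  rw [integral_congr_Ioo_of_le
    (g := fun y => (p - q) / 2 * ((r - s) / 2) * (w y * triangleWave lam y ^ 2)) hlam.le
    fun y hy => by
      simp only [hF.eqOn_mul_triangleWave ha hlam (Ioo_subset_Icc_self hy),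
        hG.eqOn_mul_triangleWave hb hlam (Ioo_subset_Icc_self hy)]
      ring]
  rw [intervalIntegral.integral_const_mul, hw.integral_mul_triangleWave_pow hlam.le]
  push_cast
  field_simp
  ring

lemma mean_layered_mul_sub_mul (hF : IsBracket lam a F) (hG : IsBracket lam b G)
    (hw : IsLayered lam w u v) (ha : IsLayered lam a p q) (hb : IsLayered lam b r s)
    (hlam : 0 < lam) :
    (1 / lam) * ∫ y in 0..lam, (w y * F y - G y) * F y =
      ((u + v) / 2 * ((p - q) / 2) - (r - s) / 2) * ((p - q) / 2) * (lam ^ 2 / 48) := by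
  have hone := IsLayered.const lam 1
  have hsplit : ∫ y in 0..lam, (w y * F y - G y) * F y =
      (∫ y in 0..lam, w y * F y * F y) - ∫ y in 0..lam, 1 * G y * F y := by
    rw [← integral_sub ((hw.intervalIntegrable_mul hF.1 hlam.le).mul_continuousOn hF.1.continuousOn)
      ((hone.intervalIntegrable_mul hG.1 hlam.le).mul_continuousOn hF.1.continuousOn)]
    simp only [sub_mul, one_mul]
  rw [hsplit, mul_sub, hF.mean_layered_mul_mul hF hw ha ha hlam,
    hG.mean_layered_mul_mul hF hone hb ha hlam]
  ring

end IsBracket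

/-- For the layered medium, with the fast-variable functions
`A = ⟦K⁻¹K_h − ρ⁻¹ρ_h⟧`, `B = ⟦K⁻¹K_h⟧`, `C = ⟦ρ ρ_m⁻¹⟧`, `F = ⟦ρ ρ_m⁻¹ B − C⟧`,
`H = ⟦ρ ρ_h⁻¹ A⟧`, the leading dispersive homogenization coefficients
`α₁ = K_h⟨K⁻¹F⟩` and `α₂ = K_h⟨K⁻¹H⟩` have the closed forms
`α₁ = −(K_A − K_B)(Z_A² − Z_B²)λ²/(192 K_m² ρ_m)` and
`α₂ = −(K_A − K_B)(c_A² − c_B²)ρ_m λ²/(192 K_m²)`. -/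
theorem layered_alpha_coefficients
    (lam KA KB ρA ρB : ℝ)
    (hlam : 0 < lam) (hKA : 0 < KA) (hKB : 0 < KB) (hρA : 0 < ρA) (hρB : 0 < ρB)
    (K ρ : ℝ → ℝ)
    (hK_per : ∀ y, K (y + lam) = K y) (hρ_per : ∀ y, ρ (y + lam) = ρ y)
    (hKvalA : ∀ y ∈ Set.Ico (0:ℝ) (lam / 2), K y = KA)
    (hKvalB : ∀ y ∈ Set.Ico (lam / 2) lam, K y = KB)
    (hρvalA : ∀ y ∈ Set.Ico (0:ℝ) (lam / 2), ρ y = ρA)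
    (hρvalB : ∀ y ∈ Set.Ico (lam / 2) lam, ρ y = ρB)
    (Km ρm Kh ρh ZA ZB cA cB : ℝ)
    (hKm : Km = (KA + KB) / 2) (hρm : ρm = (ρA + ρB) / 2)
    (hKh : Kh = ((1 / lam) * ∫ y in (0:ℝ)..lam, (K y)⁻¹)⁻¹)
    (hρh : ρh = ((1 / lam) * ∫ y in (0:ℝ)..lam, (ρ y)⁻¹)⁻¹)
    (hZA : ZA = Real.sqrt (KA * ρA)) (hZB : ZB = Real.sqrt (KB * ρB))
    (hcA : cA = Real.sqrt (KA / ρA)) (hcB : cB = Real.sqrt (KB / ρB))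
    (A B C F H : ℝ → ℝ)
    (hA : IsBracket lam (fun yh => Kh / K yh - ρh / ρ yh) A)
    (hB : IsBracket lam (fun yh => Kh / K yh) B)
    (hC : IsBracket lam (fun yh => ρ yh / ρm) C)
    (hF : IsBracket lam (fun yh => ρ yh / ρm * B yh - C yh) F)
    (hH : IsBracket lam (fun yh => ρ yh / ρh * A yh) H) :
    Kh * ((1 / lam) * ∫ y in (0:ℝ)..lam, (K y)⁻¹ * F y)
      = -((KA - KB) * (ZA ^ 2 - ZB ^ 2) * lam ^ 2) / (192 * Km ^ 2 * ρm)
    ∧ Kh * ((1 / lam) * ∫ y in (0:ℝ)..lam, (K y)⁻¹ * H y)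
      = -((KA - KB) * (cA ^ 2 - cB ^ 2) * ρm * lam ^ 2) / (192 * Km ^ 2) := by
  have hK : IsLayered lam K KA KB := ⟨hKvalA, hKvalB⟩
  have hρ : IsLayered lam ρ ρA ρB := ⟨hρvalA, hρvalB⟩
  have hK_int := (hK.comp (Kh / ·)).intervalIntegrable hlam.le
  rw [(hK.comp (·⁻¹)).mean_eq hlam] at hKh
  rw [(hρ.comp (·⁻¹)).mean_eq hlam] at hρh
  constructor
  · have hρB_int := (hρ.comp (· / ρm)).intervalIntegrable_mul hB.1 hlam.le
    rw [hF.mul_mean_inv_mul hB (hρB_int.sub (hC.1.intervalIntegrable 0 lam)) hK_int,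
      hB.mean_layered_mul_sub_mul hC (hρ.comp (· / ρm)) (hK.comp (Kh / ·)) (hρ.comp (· / ρm)) hlam,
      hKh, hKm, hρm, hZA, hZB, Real.sq_sqrt (by positivity), Real.sq_sqrt (by positivity)]
    field_simp
    ring
  · have hρA_int := (hρ.comp (· / ρh)).intervalIntegrable_mul hA.1 hlam.le
    rw [hH.mul_mean_inv_mul hB hρA_int hK_int,
      hA.mean_layered_mul_mul hB (hρ.comp (· / ρh)) ((hK.comp (Kh / ·)).sub (hρ.comp (ρh / ·)))
        (hK.comp (Kh / ·)) hlam,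
      hKh, hρh, hKm, hρm, hcA, hcB, Real.sq_sqrt (by positivity), Real.sq_sqrt (by positivity)]
    field_simp
    ring
end

section
/- Let λ > 0 and let K, ρ : ℝ → ℝ be positive, locally integrable, λ-periodic functions with constant sound speed, i.e., K(ŷ)/ρ(ŷ) = c² for some constant c > 0 and all ŷ. Set K_h = ⟨K⁻¹⟩⁻¹ and ρ_h = ⟨ρ⁻¹⟩⁻¹. Then K⁻¹K_h = ρ⁻¹ρ_h identically, so the fast-variable function A := ⟦K⁻¹K_h − ρ⁻¹ρ_h⟧ vanishes identically; consequently H := ⟦ρ ρ_h⁻¹ A⟧ ≡ 0 and D := ⟦K⁻¹K_h C − ρ⁻¹ρ_h C − A⟧ ≡ 0 for any continuous λ-periodic C, and therefore the transverse dispersive homogenization coefficients α₂ := K_h⟨K⁻¹H⟩, β₂ := −ρ_h⟨ρ⁻¹H⟩ and γ₂ := ρ_h⁻¹⟨ρD⟩ are all zero. In particular, a medium with constant sound speed exhibits no effective dispersion for transversely propagating waves at order δ². -/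
open MeasureTheory

/-- The mean `⟨f⟩ = λ⁻¹ ∫₀^λ f` of `f` over one period; it is `0` when `f` is not integrable
on `[0, λ]`. -/
noncomputable def periodMean (lam : ℝ) (f : ℝ → ℝ) : ℝ :=
  (1 / lam) * ∫ y in (0 : ℝ)..lam, f y

/-- The harmonic mean `⟨f⁻¹⟩⁻¹` of `f` over one period, which gives the homogenized coefficients
`K_h` and `ρ_h`; it is `0` when `f⁻¹` is not integrable on `[0, λ]`. -/
noncomputable def harmonicMean (lam : ℝ) (f : ℝ → ℝ) : ℝ :=
  (periodMean lam fun y => (f y)⁻¹)⁻¹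

section Means

variable (lam : ℝ)

theorem periodMean_const_mul (r : ℝ) (f : ℝ → ℝ) :
    periodMean lam (fun y => r * f y) = r * periodMean lam f := by
  simp only [periodMean, intervalIntegral.integral_const_mul, mul_left_comm]

theorem harmonicMean_const_mul (r : ℝ) (f : ℝ → ℝ) :
    harmonicMean lam (fun y => r * f y) = r * harmonicMean lam f := by
  simp only [harmonicMean, mul_inv, periodMean_const_mul, inv_inv]

theorem harmonicMean_div_eq_of_div_eq_const {f g : ℝ → ℝ} {r : ℝ} (hr : r ≠ 0)
    (hfg : ∀ y, f y / g y = r) (y : ℝ) :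
    harmonicMean lam f / f y = harmonicMean lam g / g y := by
  have hg : ∀ y, g y ≠ 0 := fun y hy => hr (by rw [← hfg y, hy, div_zero])
  obtain rfl : f = fun y => r * g y := funext fun y => (div_eq_iff (hg y)).mp (hfg y)
  rw [harmonicMean_const_mul, mul_div_mul_left _ _ hr]

end Means

namespace IsBracket

variable {lam : ℝ} {a F G : ℝ → ℝ}

theorem unique (hlam : lam ≠ 0) (hF : IsBracket lam a F) (hG : IsBracket lam a G) : F = G := by
  obtain ⟨hFcont, -, hFmean, hFint⟩ := hF
  obtain ⟨hGcont, -, hGmean, hGint⟩ := hG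
  have hconst : ∀ y, F y - G y = F 0 - G 0 := fun y => by rw [hFint y, hGint y]; ring
  have hzero : lam * (F 0 - G 0) = 0 := calc
    lam * (F 0 - G 0) = ∫ y in (0 : ℝ)..lam, (F y - G y) := by
      simp only [hconst, intervalIntegral.integral_const, sub_zero, smul_eq_mul]
    _ = (∫ y in (0 : ℝ)..lam, F y) - ∫ y in (0 : ℝ)..lam, G y :=
      intervalIntegral.integral_sub (hFcont.intervalIntegrable _ _)
        (hGcont.intervalIntegrable _ _)
    _ = 0 := by
      rw [(mul_eq_zero.mp hFmean).resolve_left (one_div_ne_zero hlam),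
        (mul_eq_zero.mp hGmean).resolve_left (one_div_ne_zero hlam), sub_zero]
  ext y
  rw [← sub_eq_zero, hconst y]
  exact (mul_eq_zero.mp hzero).resolve_left hlam

theorem const (hlam : lam ≠ 0) (k : ℝ) : IsBracket lam (fun _ => k) 0 := by
  simp [IsBracket, continuous_zero, hlam]

theorem eq_zero_of_const (hlam : lam ≠ 0) (hF : IsBracket lam a F) {k : ℝ}
    (ha : ∀ y, a y = k) : F = 0 := by
  obtain rfl : a = fun _ => k := funext ha
  exact hF.unique hlam (const hlam k)

end IsBracket

theorem constant_sound_speed_no_transverse_dispersion_general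
    {lam r : ℝ} (hlam : lam ≠ 0) (hr : r ≠ 0) {K ρ : ℝ → ℝ} (hspeed : ∀ y, K y / ρ y = r)
    {Kh ρh : ℝ} (hKh : Kh = harmonicMean lam K) (hρh : ρh = harmonicMean lam ρ) :
    (∀ y, Kh / K y = ρh / ρ y)
    ∧ ∀ C A H D : ℝ → ℝ,
        IsBracket lam (fun y => Kh / K y - ρh / ρ y) A →
        IsBracket lam (fun y => ρ y / ρh * A y) H →
        IsBracket lam (fun y => Kh / K y * C y - ρh / ρ y * C y - A y) D →
        (∀ y, A y = 0) ∧ (∀ y, H y = 0) ∧ (∀ y, D y = 0)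
        ∧ Kh * periodMean lam (fun y => (K y)⁻¹ * H y) = 0
        ∧ -(ρh * periodMean lam (fun y => (ρ y)⁻¹ * H y)) = 0
        ∧ ρh⁻¹ * periodMean lam (fun y => ρ y * D y) = 0 := by
  have hratio : ∀ y, Kh / K y = ρh / ρ y := by
    rw [hKh, hρh]
    exact harmonicMean_div_eq_of_div_eq_const lam hr hspeed
  refine ⟨hratio, fun C A H D hA hH hD => ?_⟩
  obtain rfl : A = 0 := hA.eq_zero_of_const hlam fun y => sub_eq_zero.mpr (hratio y)
  obtain rfl : H = 0 := hH.eq_zero_of_const hlam fun y => mul_zero (ρ y / ρh)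
  obtain rfl : D = 0 := hD.eq_zero_of_const hlam (k := 0) fun y => by simp [hratio y]
  simp [periodMean]

/-- In a `λ`-periodic medium with constant sound speed (`K = c²ρ`),
one has `K⁻¹K_h = ρ⁻¹ρ_h`, the fast-variable functions `A = ⟦K⁻¹K_h − ρ⁻¹ρ_h⟧`,
`H = ⟦ρ ρ_h⁻¹ A⟧` and `D = ⟦K⁻¹K_h C − ρ⁻¹ρ_h C − A⟧` (for any continuous `λ`-periodic `C`)
vanish identically, and hence the transverse dispersive homogenization coefficients
`α₂ = K_h⟨K⁻¹H⟩`, `β₂ = −ρ_h⟨ρ⁻¹H⟩`, `γ₂ = ρ_h⁻¹⟨ρD⟩` are all zero: a medium with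
constant sound speed exhibits no effective transverse dispersion at order `δ²`. -/
theorem constant_sound_speed_no_transverse_dispersion
    (lam c : ℝ) (hlam : 0 < lam) (hc : 0 < c)
    (K ρ : ℝ → ℝ) (hKpos : ∀ yh, 0 < K yh) (hρpos : ∀ yh, 0 < ρ yh)
    (hKint : LocallyIntegrable K volume) (hρint : LocallyIntegrable ρ volume)
    (hK_per : ∀ y, K (y + lam) = K y) (hρ_per : ∀ y, ρ (y + lam) = ρ y)
    (hspeed : ∀ yh, K yh / ρ yh = c ^ 2)
    (Kh ρh : ℝ)
    (hKh : Kh = ((1 / lam) * ∫ y in (0:ℝ)..lam, (K y)⁻¹)⁻¹)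
    (hρh : ρh = ((1 / lam) * ∫ y in (0:ℝ)..lam, (ρ y)⁻¹)⁻¹) :
    (∀ yh, Kh / K yh = ρh / ρ yh)
    ∧ ∀ C : ℝ → ℝ, Continuous C → (∀ y, C (y + lam) = C y) →
      ∀ A H D : ℝ → ℝ,
        IsBracket lam (fun yh => Kh / K yh - ρh / ρ yh) A →
        IsBracket lam (fun yh => ρ yh / ρh * A yh) H →
        IsBracket lam (fun yh => Kh / K yh * C yh - ρh / ρ yh * C yh - A yh) D →
        (∀ yh, A yh = 0) ∧ (∀ yh, H yh = 0) ∧ (∀ yh, D yh = 0)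
        ∧ Kh * ((1 / lam) * ∫ y in (0:ℝ)..lam, (K y)⁻¹ * H y) = 0
        ∧ -(ρh * ((1 / lam) * ∫ y in (0:ℝ)..lam, (ρ y)⁻¹ * H y)) = 0
        ∧ ρh⁻¹ * ((1 / lam) * ∫ y in (0:ℝ)..lam, ρ y * D y) = 0 := by
  have hgeneral := constant_sound_speed_no_transverse_dispersion_general hlam.ne'
    (pow_ne_zero 2 hc.ne') hspeed hKh hρh
  exact ⟨hgeneral.1, fun C _ _ => hgeneral.2 C⟩
end

section
/- For the layered medium, with the fast-variable functions A = ⟦K⁻¹K_h − ρ⁻¹ρ_h⟧, B = ⟦K⁻¹K_h⟧, C = ⟦ρ ρ_m⁻¹⟧, the averages appearing in the first-order homogenized correction all vanish: ⟨K⁻¹C⟩ = 0, ⟨ρ⁻¹C⟩ = 0, ⟨ρA⟩ = 0 and ⟨ρB⟩ = 0. Consequently the first-order homogenized correction to the effective acoustic system is identically zero for this medium. -/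
open MeasureTheory

/-!
On each layer the derivative of the bracket `F` is constant, so `F` is affine there and its mean
over the layer is half the sum of its values at the two ends of the layer. By periodicity `F` takes
the same pair of values at the ends of either layer, so the two layer means agree; as `F` has zero
mean over the period, both vanish. Hence `F` is orthogonal to every weight that is constant on each
layer, wherever in the period the interface lies.
-/

/-- `IsTwoLayer lam c g gA gB` says that on the period from `0` to `lam`, split by an interface at
`c`, the function `g` takes the value `gA` in the first layer and `gB` in the second. The layers are
taken open, leaving the values of `g` at the interfaces free, and unordered, so that the notion fits
interval integrals without any assumption on the order of `0`, `c` and `lam`. -/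
def IsTwoLayer {α : Type*} (lam c : ℝ) (g : ℝ → α) (gA gB : α) : Prop :=
  Set.EqOn g (fun _ => gA) (Set.uIoo 0 c) ∧ Set.EqOn g (fun _ => gB) (Set.uIoo c lam)

namespace IsTwoLayer

variable {α β γ : Type*} {lam c : ℝ}

theorem of_Ico {g : ℝ → α} {gA gB : α} (hc₀ : 0 ≤ c) (hc : c ≤ lam)
    (hgA : ∀ y ∈ Set.Ico 0 c, g y = gA) (hgB : ∀ y ∈ Set.Ico c lam, g y = gB) :
    IsTwoLayer lam c g gA gB := by
  rw [IsTwoLayer, Set.uIoo_of_le hc₀, Set.uIoo_of_le hc]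
  exact ⟨fun y hy => hgA y (Set.Ioo_subset_Ico_self hy),
    fun y hy => hgB y (Set.Ioo_subset_Ico_self hy)⟩

theorem comp {g : ℝ → α} {gA gB : α} (hg : IsTwoLayer lam c g gA gB) (φ : α → β) :
    IsTwoLayer lam c (fun y => φ (g y)) (φ gA) (φ gB) :=
  ⟨fun _ hy => congrArg φ (hg.1 hy), fun _ hy => congrArg φ (hg.2 hy)⟩

theorem comp₂ {f : ℝ → α} {g : ℝ → β} {fA fB : α} {gA gB : β}
    (hf : IsTwoLayer lam c f fA fB) (hg : IsTwoLayer lam c g gA gB) (φ : α → β → γ) :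
    IsTwoLayer lam c (fun y => φ (f y) (g y)) (φ fA gA) (φ fB gB) :=
  ⟨fun _ hy => congrArg₂ φ (hf.1 hy) (hg.1 hy), fun _ hy => congrArg₂ φ (hf.2 hy) (hg.2 hy)⟩

theorem integral_mul {g F : ℝ → ℝ} {gA gB : ℝ} (hg : IsTwoLayer lam c g gA gB)
    (hFA : IntervalIntegrable F volume 0 c) (hFB : IntervalIntegrable F volume c lam) :
    ∫ y in 0..lam, g y * F y = gA * (∫ y in 0..c, F y) + gB * ∫ y in c..lam, F y := by
  have hA : Set.EqOn (fun y => g y * F y) (fun y => gA * F y) (Set.uIoo 0 c) :=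
    fun y hy => congrArg (· * F y) (hg.1 hy)
  have hB : Set.EqOn (fun y => g y * F y) (fun y => gB * F y) (Set.uIoo c lam) :=
    fun y hy => congrArg (· * F y) (hg.2 hy)
  rw [← intervalIntegral.integral_add_adjacent_intervals
      ((hFA.const_mul gA).congr_uIoo hA.symm) ((hFB.const_mul gB).congr_uIoo hB.symm),
    intervalIntegral.integral_congr_uIoo hA, intervalIntegral.integral_congr_uIoo hB,
    intervalIntegral.integral_const_mul, intervalIntegral.integral_const_mul]

end IsTwoLayer

theorem intervalIntegrable_of_eqOn_const {a : ℝ → ℝ} {p q v : ℝ}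
    (ha : Set.EqOn a (fun _ => v) (Set.uIoo p q)) : IntervalIntegrable a volume p q :=
  intervalIntegrable_const.congr_uIoo ha.symm

theorem integral_eq_trapezoid_of_affine {f : ℝ → ℝ} {p q s : ℝ}
    (hf : ∀ y ∈ Set.uIcc p q, f y = f p + s * (y - p)) :
    ∫ y in p..q, f y = (q - p) * ((f p + f q) / 2) := by
  have hslope : ∫ y in p..q, s * (y - p) = s * ((q - p) ^ 2 / 2) := by
    simp [intervalIntegral.integral_comp_sub_right (fun y => y)]
  calc ∫ y in p..q, f y = ∫ y in p..q, (f p + s * (y - p)) :=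
        intervalIntegral.integral_congr hf
    _ = (q - p) * f p + s * ((q - p) ^ 2 / 2) := by
        rw [intervalIntegral.integral_add intervalIntegrable_const
            (Continuous.intervalIntegrable (by fun_prop) _ _),
          intervalIntegral.integral_const, smul_eq_mul, hslope]
    _ = (q - p) * ((f p + f q) / 2) := by
        rw [hf q Set.right_mem_uIcc]
        ring

namespace IsBracket

variable {lam p q v : ℝ} {a F : ℝ → ℝ}

theorem sub_eq_integral (hF : IsBracket lam a F) (hp : IntervalIntegrable a volume 0 p)
    (hpq : IntervalIntegrable a volume p q) :
    F q - F p = ∫ ξ in p..q, (a ξ - (1 / lam) * ∫ s in 0..lam, a s) := by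
  rw [hF.2.2.2 q, hF.2.2.2 p, ← intervalIntegral.integral_add_adjacent_intervals
    (hp.sub intervalIntegrable_const) (hpq.sub intervalIntegrable_const)]
  ring

theorem eq_affine_of_eqOn_const (hF : IsBracket lam a F) (hp : IntervalIntegrable a volume 0 p)
    (ha : Set.EqOn a (fun _ => v) (Set.uIoo p q)) {y : ℝ} (hy : y ∈ Set.uIcc p q) :
    F y = F p + (v - (1 / lam) * ∫ s in 0..lam, a s) * (y - p) := by
  have hay : Set.EqOn a (fun _ => v) (Set.uIoo p y) :=
    ha.mono (Set.uIoo_subset_Ioo Set.left_mem_uIcc hy)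
  have hslope : Set.EqOn (fun ξ => a ξ - (1 / lam) * ∫ s in 0..lam, a s)
      (fun _ => v - (1 / lam) * ∫ s in 0..lam, a s) (Set.uIoo p y) :=
    fun ξ hξ => congrArg (· - (1 / lam) * ∫ s in 0..lam, a s) (hay hξ)
  have hincr := hF.sub_eq_integral hp (intervalIntegrable_of_eqOn_const hay)
  rw [intervalIntegral.integral_congr_uIoo hslope, intervalIntegral.integral_const,
    smul_eq_mul] at hincr
  linear_combination hincr

theorem integral_eq_trapezoid (hF : IsBracket lam a F) (hp : IntervalIntegrable a volume 0 p)
    (ha : Set.EqOn a (fun _ => v) (Set.uIoo p q)) :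
    ∫ y in p..q, F y = (q - p) * ((F p + F q) / 2) :=
  integral_eq_trapezoid_of_affine fun _ hy => hF.eq_affine_of_eqOn_const hp ha hy

theorem integral_layers_eq_zero {c aA aB : ℝ} (hF : IsBracket lam a F) (hlam : lam ≠ 0)
    (ha : IsTwoLayer lam c a aA aB) :
    ∫ y in 0..c, F y = 0 ∧ ∫ y in c..lam, F y = 0 := by
  have ⟨hcont, hper, hmean, _⟩ := hF
  have hA : ∫ y in 0..c, F y = c * ((F 0 + F c) / 2) := by
    rw [hF.integral_eq_trapezoid IntervalIntegrable.refl ha.1, sub_zero]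
  have hB : ∫ y in c..lam, F y = (lam - c) * ((F 0 + F c) / 2) := by
    have hperiod : F lam = F 0 := by simpa only [zero_add] using hper 0
    rw [hF.integral_eq_trapezoid (intervalIntegrable_of_eqOn_const ha.1) ha.2, hperiod,
      add_comm (F c)]
  have htotal : ∫ y in 0..lam, F y = lam * ((F 0 + F c) / 2) := by
    rw [← intervalIntegral.integral_add_adjacent_intervals (hcont.intervalIntegrable 0 c)
      (hcont.intervalIntegrable c lam), hA, hB]
    ring
  have hends : (F 0 + F c) / 2 = 0 := by
    rwa [htotal, one_div, inv_mul_cancel_left₀ hlam] at hmean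
  rw [hends, mul_zero] at hA hB
  exact ⟨hA, hB⟩

end IsBracket

theorem layered_first_order_correction_averages_vanish_general
    {lam c aA aB gA gB : ℝ} {a F g : ℝ → ℝ} (hlam : lam ≠ 0)
    (ha : IsTwoLayer lam c a aA aB) (hF : IsBracket lam a F) (hg : IsTwoLayer lam c g gA gB) :
    (1 / lam) * (∫ y in 0..lam, g y * F y) = 0 := by
  obtain ⟨hA, hB⟩ := hF.integral_layers_eq_zero hlam ha
  rw [hg.integral_mul (hF.1.intervalIntegrable _ _) (hF.1.intervalIntegrable _ _), hA, hB,
    mul_zero, mul_zero, add_zero, mul_zero]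

/-- For the layered medium, with the fast-variable functions
`A = ⟦K⁻¹K_h − ρ⁻¹ρ_h⟧`, `B = ⟦K⁻¹K_h⟧`, `C = ⟦ρ ρ_m⁻¹⟧`, the averages appearing in the
first-order homogenized correction all vanish:
`⟨K⁻¹C⟩ = 0`, `⟨ρ⁻¹C⟩ = 0`, `⟨ρA⟩ = 0`, `⟨ρB⟩ = 0`; hence the first-order homogenized
correction to the effective acoustic system is identically zero for this medium. -/
theorem layered_first_order_correction_averages_vanish
    (lam KA KB ρA ρB : ℝ)
    (hlam : 0 < lam) (hKA : 0 < KA) (hKB : 0 < KB) (hρA : 0 < ρA) (hρB : 0 < ρB)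
    (K ρ : ℝ → ℝ)
    (hK_per : ∀ y, K (y + lam) = K y) (hρ_per : ∀ y, ρ (y + lam) = ρ y)
    (hKvalA : ∀ y ∈ Set.Ico (0:ℝ) (lam / 2), K y = KA)
    (hKvalB : ∀ y ∈ Set.Ico (lam / 2) lam, K y = KB)
    (hρvalA : ∀ y ∈ Set.Ico (0:ℝ) (lam / 2), ρ y = ρA)
    (hρvalB : ∀ y ∈ Set.Ico (lam / 2) lam, ρ y = ρB)
    (Km ρm Kh ρh : ℝ)
    (hKm : Km = (KA + KB) / 2) (hρm : ρm = (ρA + ρB) / 2)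
    (hKh : Kh = ((1 / lam) * ∫ y in (0:ℝ)..lam, (K y)⁻¹)⁻¹)
    (hρh : ρh = ((1 / lam) * ∫ y in (0:ℝ)..lam, (ρ y)⁻¹)⁻¹)
    (A B C : ℝ → ℝ)
    (hA : IsBracket lam (fun yh => Kh / K yh - ρh / ρ yh) A)
    (hB : IsBracket lam (fun yh => Kh / K yh) B)
    (hC : IsBracket lam (fun yh => ρ yh / ρm) C) :
    (1 / lam) * (∫ y in (0:ℝ)..lam, (K y)⁻¹ * C y) = 0
    ∧ (1 / lam) * (∫ y in (0:ℝ)..lam, (ρ y)⁻¹ * C y) = 0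
    ∧ (1 / lam) * (∫ y in (0:ℝ)..lam, ρ y * A y) = 0
    ∧ (1 / lam) * (∫ y in (0:ℝ)..lam, ρ y * B y) = 0 := by
  have hhalf₀ : 0 ≤ lam / 2 := by positivity
  have hhalf : lam / 2 ≤ lam := half_le_self hlam.le
  have hK : IsTwoLayer lam (lam / 2) K KA KB := .of_Ico hhalf₀ hhalf hKvalA hKvalB
  have hρ : IsTwoLayer lam (lam / 2) ρ ρA ρB := .of_Ico hhalf₀ hhalf hρvalA hρvalB
  have hρm_layers := hρ.comp (· / ρm)
  exact ⟨layered_first_order_correction_averages_vanish_general hlam.ne' hρm_layers hC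
      (hK.comp (·⁻¹)),
    layered_first_order_correction_averages_vanish_general hlam.ne' hρm_layers hC
      (hρ.comp (·⁻¹)),
    layered_first_order_correction_averages_vanish_general hlam.ne'
      (hK.comp₂ hρ fun k r => Kh / k - ρh / r) hA hρ,
    layered_first_order_correction_averages_vanish_general hlam.ne' (hK.comp (Kh / ·)) hB hρ⟩
end

section
/- Let K_A, K_B, ρ_A, ρ_B, λ > 0 and set K_m = (K_A+K_B)/2, ρ_m = (ρ_A+ρ_B)/2, ρ_h = 2ρ_Aρ_B/(ρ_A+ρ_B), Z_i² = K_iρ_i, c_i² = K_i/ρ_i. Define the leading dispersive coefficients by their closed forms for the layered medium: α₁ = −(K_A−K_B)(Z_A²−Z_B²)λ²/(192K_m²ρ_m), γ₁ = −(ρ_A−ρ_B)(Z_A²−Z_B²)λ²/(192K_mρ_m²), α₂ = −(K_A−K_B)(c_A²−c_B²)ρ_mλ²/(192K_m²), β₂ = (ρ_A−ρ_B)(c_A²−c_B²)λ²/(192K_m). Then the combined dispersive coefficients governing normal and transverse propagation satisfy α₁ + γ₁ = −(Z_A² − Z_B²)² λ² / (192 K_m² ρ_m²) and α₂ + β₂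 = −ρ_m ρ_h (c_A² − c_B²)² λ² / (192 K_m²). In particular α₁ + γ₁ is proportional to the square of the impedance contrast and α₂ + β₂ to the square of the sound-speed contrast, each vanishing exactly when the respective contrast is zero. -/
/-!
By the discrete product rule, the impedance contrast `Z_A² - Z_B²` is the contrast of `K` weighted
by `ρ_m` plus the contrast of `ρ` weighted by `K_m`; over a common denominator the numerators of
`α₁` and `γ₁` combine into exactly this sum, times another factor `Z_A² - Z_B²`. For `α₂ + β₂`
the discrete quotient rule plays the same role, its denominator `ρ_A ρ_B` being `ρ_m ρ_h`.
-/

section TwoLayer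

variable {F : Type*} [Field F]

theorem mul_sub_mul_eq_sub_mul_mean_add_sub_mul_mean (h2 : (2 : F) ≠ 0) (a b c d : F) :
    a * c - b * d = (a - b) * ((c + d) / 2) + (c - d) * ((a + b) / 2) := by
  field_simp
  ring

theorem mul_mul_div_sub_div_eq_sub_mul_mean_sub_sub_mul_mean (h2 : (2 : F) ≠ 0) (a b : F)
    {c d : F} (hc : c ≠ 0) (hd : d ≠ 0) :
    c * d * (a / c - b / d) = (a - b) * ((c + d) / 2) - (c - d) * ((a + b) / 2) := by
  field_simp
  ring

theorem arithmetic_mean_mul_harmonic_mean (h2 : (2 : F) ≠ 0) {a b : F} (hab : a + b ≠ 0) :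
    (a + b) / 2 * (2 * a * b / (a + b)) = a * b := by
  field_simp

theorem normal_dispersion_add {K ρ dK dρ dZ2 : F} (hK : K ≠ 0) (hρ : ρ ≠ 0)
    (hdZ2 : dZ2 = dK * ρ + dρ * K) (L N : F) :
    -(dK * dZ2 * L) / (N * K ^ 2 * ρ) + -(dρ * dZ2 * L) / (N * K * ρ ^ 2)
      = -(dZ2 ^ 2 * L) / (N * K ^ 2 * ρ ^ 2) := by
  calc
    _ = -((dK * ρ + dρ * K) * dZ2 * L) / (N * K ^ 2 * ρ ^ 2) := by
      field_simp
      ring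
    _ = _ := by rw [← hdZ2, sq dZ2]

theorem transverse_dispersion_add {K ρ P dK dρ dc2 : F} (hK : K ≠ 0)
    (hdc2 : P * dc2 = dK * ρ - dρ * K) (L N : F) :
    -(dK * dc2 * ρ * L) / (N * K ^ 2) + dρ * dc2 * L / (N * K)
      = -(P * dc2 ^ 2 * L) / (N * K ^ 2) := by
  calc
    _ = -((dK * ρ - dρ * K) * dc2 * L) / (N * K ^ 2) := by
      field_simp
      ring
    _ = _ := by rw [← hdc2, mul_assoc P, ← sq]

/-- With `F = ℂ` this covers lossy layers, whose frequency-domain moduli and densities are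
complex. -/
theorem combined_dispersive_coefficients_general
    (h2 : (2 : F) ≠ 0) (h3 : (3 : F) ≠ 0) {lam KA KB ρA ρB : F}
    (hlam : lam ≠ 0) (hK : KA + KB ≠ 0) (hρ : ρA + ρB ≠ 0) (hρA : ρA ≠ 0) (hρB : ρB ≠ 0)
    {Km ρm ρh ZA2 ZB2 cA2 cB2 : F}
    (hKm : Km = (KA + KB) / 2) (hρm : ρm = (ρA + ρB) / 2)
    (hρh : ρh = 2 * ρA * ρB / (ρA + ρB))
    (hZA2 : ZA2 = KA * ρA) (hZB2 : ZB2 = KB * ρB)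
    (hcA2 : cA2 = KA / ρA) (hcB2 : cB2 = KB / ρB)
    {α₁ γ₁ α₂ β₂ : F}
    (hα₁ : α₁ = -((KA - KB) * (ZA2 - ZB2) * lam ^ 2) / (192 * Km ^ 2 * ρm))
    (hγ₁ : γ₁ = -((ρA - ρB) * (ZA2 - ZB2) * lam ^ 2) / (192 * Km * ρm ^ 2))
    (hα₂ : α₂ = -((KA - KB) * (cA2 - cB2) * ρm * lam ^ 2) / (192 * Km ^ 2))
    (hβ₂ : β₂ = (ρA - ρB) * (cA2 - cB2) * lam ^ 2 / (192 * Km)) :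
    α₁ + γ₁ = -((ZA2 - ZB2) ^ 2 * lam ^ 2) / (192 * Km ^ 2 * ρm ^ 2)
    ∧ α₂ + β₂ = -(ρm * ρh * (cA2 - cB2) ^ 2 * lam ^ 2) / (192 * Km ^ 2)
    ∧ (α₁ + γ₁ = 0 ↔ ZA2 = ZB2)
    ∧ (α₂ + β₂ = 0 ↔ cA2 = cB2) := by
  have h192 : (192 : F) ≠ 0 := by
    rw [show (192 : F) = 2 ^ 6 * 3 by norm_num]
    exact mul_ne_zero (pow_ne_zero 6 h2) h3
  have hKm0 : Km ≠ 0 := hKm ▸ div_ne_zero hK h2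
  have hρm0 : ρm ≠ 0 := hρm ▸ div_ne_zero hρ h2
  have hmean : ρm * ρh = ρA * ρB := by
    rw [hρm, hρh, arithmetic_mean_mul_harmonic_mean h2 hρ]
  have himpedance : ZA2 - ZB2 = (KA - KB) * ρm + (ρA - ρB) * Km := by
    rw [hZA2, hZB2, hKm, hρm, mul_sub_mul_eq_sub_mul_mean_add_sub_mul_mean h2]
  have hspeed : ρm * ρh * (cA2 - cB2) = (KA - KB) * ρm - (ρA - ρB) * Km := by
    rw [hmean, hcA2, hcB2, hKm, hρm,
      mul_mul_div_sub_div_eq_sub_mul_mean_sub_sub_mul_mean h2 KA KB hρA hρB]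
  have hnormal : α₁ + γ₁ = -((ZA2 - ZB2) ^ 2 * lam ^ 2) / (192 * Km ^ 2 * ρm ^ 2) := by
    rw [hα₁, hγ₁, normal_dispersion_add hKm0 hρm0 himpedance]
  have htransverse : α₂ + β₂ = -(ρm * ρh * (cA2 - cB2) ^ 2 * lam ^ 2) / (192 * Km ^ 2) := by
    rw [hα₂, hβ₂, transverse_dispersion_add hKm0 hspeed]
  refine ⟨hnormal, htransverse, ?_, ?_⟩
  · rw [hnormal]
    simp [h192, hKm0, hρm0, hlam, sub_eq_zero]
  · rw [htransverse, hmean]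
    simp [h192, hKm0, hρA, hρB, hlam, sub_eq_zero]

end TwoLayer

/-- For the two-layer medium, the combined dispersive coefficients satisfy
`α₁ + γ₁ = −(Z_A² − Z_B²)² λ²/(192 K_m² ρ_m²)` and
`α₂ + β₂ = −ρ_m ρ_h (c_A² − c_B²)² λ²/(192 K_m²)`; in particular `α₁ + γ₁` is proportional
to the squared impedance contrast and `α₂ + β₂` to the squared sound-speed contrast, each
vanishing exactly when the respective contrast is zero. -/
theorem combined_dispersive_coefficients
    (lam KA KB ρA ρB : ℝ)
    (hlam : 0 < lam) (hKA : 0 < KA) (hKB : 0 < KB) (hρA : 0 < ρA) (hρB : 0 < ρB)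
    (Km ρm ρh ZA2 ZB2 cA2 cB2 : ℝ)
    (hKm : Km = (KA + KB) / 2) (hρm : ρm = (ρA + ρB) / 2)
    (hρh : ρh = 2 * ρA * ρB / (ρA + ρB))
    (hZA2 : ZA2 = KA * ρA) (hZB2 : ZB2 = KB * ρB)
    (hcA2 : cA2 = KA / ρA) (hcB2 : cB2 = KB / ρB)
    (α₁ γ₁ α₂ β₂ : ℝ)
    (hα₁ : α₁ = -((KA - KB) * (ZA2 - ZB2) * lam ^ 2) / (192 * Km ^ 2 * ρm))
    (hγ₁ : γ₁ = -((ρA - ρB) * (ZA2 - ZB2) * lam ^ 2) / (192 * Km * ρm ^ 2))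
    (hα₂ : α₂ = -((KA - KB) * (cA2 - cB2) * ρm * lam ^ 2) / (192 * Km ^ 2))
    (hβ₂ : β₂ = (ρA - ρB) * (cA2 - cB2) * lam ^ 2 / (192 * Km)) :
    α₁ + γ₁ = -((ZA2 - ZB2) ^ 2 * lam ^ 2) / (192 * Km ^ 2 * ρm ^ 2)
    ∧ α₂ + β₂ = -(ρm * ρh * (cA2 - cB2) ^ 2 * lam ^ 2) / (192 * Km ^ 2)
    ∧ (α₁ + γ₁ = 0 ↔ ZA2 = ZB2)
    ∧ (α₂ + β₂ = 0 ↔ cA2 = cB2) := by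
  exact combined_dispersive_coefficients_general two_ne_zero three_ne_zero hlam.ne'
    (add_pos hKA hKB).ne' (add_pos hρA hρB).ne' hρA.ne' hρB.ne'
    hKm hρm hρh hZA2 hZB2 hcA2 hcB2 hα₁ hγ₁ hα₂ hβ₂
end
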